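/- For every n ≥ 4, the Möbius-ladder of length n (the circulant graph on the 2n vertices ℤ_{2n} in which x and y are adjacent exactly when x − y ≡ ±1 (mod 2n) or x − y ≡ n (mod 2n)) has the same optimal rubbling number as the n-prism C_n□P_2. -/

import Mathlib

open SimpleGraph

/-- A single rubbling move on `G`: either a pebbling move (remove two pebbles at `v`,
add one at an adjacent vertex `u`) or a strict rubbling move (remove one pebble each at
distinct `v` and `w`, both adjacent to `u`, and add one pebble at `u`). -/
def RubblingStep {V : Type*} [DecidableEq V] (G : SimpleGraph V) (p q : V → ℕ) : Prop :=
  (∃ v u, G.Adj v u ∧ 2 ≤ p v ∧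
      q = fun x => if x = v then p x - 2 else if x = u then p x + 1 else p x) ∨
  (∃ v w u, v ≠ w ∧ G.Adj v u ∧ G.Adj w u ∧ 1 ≤ p v ∧ 1 ≤ p w ∧
      q = fun x => if x = v then p x - 1 else if x = w then p x - 1
          else if x = u then p x + 1 else p x)

/-- `q` is obtainable from `p` by an executable rubbling sequence. -/
def RubblingReach {V : Type*} [DecidableEq V] (G : SimpleGraph V) : (V → ℕ) → (V → ℕ) → Prop :=
  Relation.ReflTransGen (RubblingStep G)

/-- The vertex `u` is `k`-reachable from the distribution `p`. -/
def KReachable {V : Type*} [DecidableEq V] (G : SimpleGraph V) (p : V → ℕ) (u : V) (k : ℕ) : Prop :=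
  ∃ q, RubblingReach G p q ∧ k ≤ q u

/-- `p` is solvable: every vertex is reachable. -/
def Solvable {V : Type*} [DecidableEq V] (G : SimpleGraph V) (p : V → ℕ) : Prop :=
  ∀ u, KReachable G p u 1

/-- The optimal rubbling number: the minimum size of a solvable distribution. -/
noncomputable def optRub {V : Type*} [DecidableEq V] [Fintype V] (G : SimpleGraph V) : ℕ :=
  sInf {m | ∃ p : V → ℕ, Solvable G p ∧ ∑ v, p v = m}

/-- The `n`-prism `C_n □ P_2`. -/
def prism (n : ℕ) : SimpleGraph (Fin n × Fin 2) :=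
  cycleGraph n □ pathGraph 2

/-- The Möbius ladder of length `n`: the circulant graph on `ℤ_{2n}` with connection
set `{1, 2n-1, n}`. -/
def mobiusLadder (n : ℕ) : SimpleGraph (ZMod (2 * n)) :=
  SimpleGraph.fromRel (fun x y => x - y = 1 ∨ x - y = (n : ZMod (2 * n)))

/-!
Both graphs are ladders closed up to a ring, and both optimal rubbling numbers equal
`⌈2 * n / 3⌉`.

For the lower bound, give a pebble at distance `d` from a vertex the weight `2 ^ (-d)`; a reachable
vertex collects weight at least `1`. Applying this in every column, rather than only at the target,
bounds what can be gathered on a column from either side. The amount gathered, together with whether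
it can be directed to either vertex of the column, determines a potential. At an empty column the
potentials from the left and from the right drop by at least `4` in total, while a column with
`P ≥ 1` pebbles raises each of them by at most `3 * P - 2`. Summing around the ring gives
`4 * n ≤ 6 * ∑ P`. Only the unrolled, periodic ladder enters, so the twist does not matter.

For the upper bound with `n ≥ 5`, one pebble on each column `k` with `k % 3 ≠ 2`, on alternating
rails, is enough: adjacent pebbles on opposite rails reach each other's columns, and an empty column
is reached from its two neighbours. This also survives the twist, as it only uses whole columns.
-/

/-- `TreeReachable G p u`: a pebble reaches `u` along a tree, that is, either `u` carries a pebble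
of `p`, or `p` splits into two distributions from which two (possibly equal) neighbours of `u` are
reachable in the same way. In contrast to a rubbling sequence, such a tree never has to be ordered,
and `KReachable G p u 1` is equivalent to it. -/
inductive TreeReachable {V : Type*} (G : SimpleGraph V) : (V → ℕ) → V → Prop
  | leaf {p : V → ℕ} {u : V} (h : 1 ≤ p u) : TreeReachable G p u
  | node {p q : V → ℕ} {a b u : V} (ha : G.Adj a u) (hb : G.Adj b u)
      (hp : TreeReachable G p a) (hq : TreeReachable G q b) : TreeReachable G (p + q) u

lemma TreeReachable.mono {V : Type*} {G : SimpleGraph V} {p q : V → ℕ} {u : V}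
    (h : TreeReachable G p u) (hpq : p ≤ q) : TreeReachable G q u := by
  obtain ⟨r, rfl⟩ := exists_add_of_le hpq
  clear hpq
  induction h with
  | leaf h => exact leaf (h.trans (Nat.le_add_right _ _))
  | node ha hb _ hq ihp _ => exact add_right_comm _ r _ ▸ node ha hb ihp hq

section Trees

variable {V : Type*} [DecidableEq V] {G : SimpleGraph V} {p q r : V → ℕ} {a b u v w x : V}

lemma exists_eq_add_single (h : 1 ≤ p u) : ∃ r : V → ℕ, p = r + Pi.single u 1 :=
  ⟨p - Pi.single u 1, (tsub_add_cancel_of_le fun x => by grind).symm⟩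

/-- Both kinds of rubbling moves at once: the two kinds are the cases `v = w` and `v ≠ w`. -/
lemma rubblingStep_iff : RubblingStep G p q ↔ ∃ (v w u : V) (r : V → ℕ),
    G.Adj v u ∧ G.Adj w u ∧ p = r + Pi.single v 1 + Pi.single w 1 ∧ q = r + Pi.single u 1 := by
  constructor
  · rintro (⟨v, u, hvu, hv, rfl⟩ | ⟨v, w, u, hvw, hvu, hwu, hv, hw, rfl⟩)
    · refine ⟨v, v, u, p - Pi.single v 2, hvu, hvu, ?_, ?_⟩ <;> funext x <;>
        have := hvu.ne <;> grind [Pi.add_apply, Pi.sub_apply]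
    · refine ⟨v, w, u, p - Pi.single v 1 - Pi.single w 1, hvu, hwu, ?_, ?_⟩ <;> funext x <;>
        have := hvu.ne <;> have := hwu.ne <;> grind [Pi.add_apply, Pi.sub_apply]
  · rintro ⟨v, w, u, r, hvu, hwu, rfl, rfl⟩
    have := hvu.ne
    have := hwu.ne
    by_cases hvw : v = w
    · subst hvw
      refine Or.inl ⟨v, u, hvu, by simp, funext fun x => ?_⟩
      grind [Pi.add_apply]
    · refine Or.inr ⟨v, w, u, hvw, hvu, hwu, by simp [hvw], by simp, funext fun x => ?_⟩
      grind [Pi.add_apply]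

lemma RubblingReach.add_right (h : RubblingReach G p q) (r : V → ℕ) :
    RubblingReach G (p + r) (q + r) := by
  refine Relation.ReflTransGen.lift (· + r) (fun p q hpq => ?_) p q h
  obtain ⟨v, w, u, t, hv, hw, rfl, rfl⟩ := rubblingStep_iff.1 hpq
  change RubblingStep G (_ + r) (_ + r)
  exact rubblingStep_iff.2 ⟨v, w, u, t + r, hv, hw, by abel, by abel⟩

namespace TreeReachable

lemma expand (h : TreeReachable G (r + Pi.single x 1) u) (hv : G.Adj v x) (hw : G.Adj w x) :
    TreeReachable G (r + Pi.single v 1 + Pi.single w 1) u := by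
  generalize hp : r + Pi.single x 1 = p at h
  induction h generalizing r with
  | @leaf p u h =>
    subst hp
    by_cases hux : u = x
    · subst hux
      exact node hv hw (leaf (by simp)) (leaf (by simp))
    · rw [Pi.add_apply, Pi.single_eq_of_ne hux] at h
      exact leaf (by simp only [Pi.add_apply]; omega)
  | @node p q a b u ha hb hp' hq' ihp ihq =>
    have hx : 1 ≤ p x ∨ 1 ≤ q x := by
      have := congrFun hp x
      simp only [Pi.add_apply, Pi.single_eq_same] at this
      omega
    rcases hx with hx | hx <;> obtain ⟨t, rfl⟩ := exists_eq_add_single hx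
    · obtain rfl : r = t + q := add_right_cancel (hp.trans (add_right_comm _ _ _))
      convert node ha hb (ihp rfl) hq' using 1
      abel
    · obtain rfl : r = p + t := add_right_cancel (hp.trans (add_assoc _ _ _).symm)
      convert node ha hb hp' (ihq rfl) using 1
      abel

lemma of_rubblingReach (hpq : RubblingReach G p q) (hq : TreeReachable G q u) :
    TreeReachable G p u := by
  induction hpq using Relation.ReflTransGen.head_induction_on with
  | refl => exact hq
  | head hstep _ ih =>
    obtain ⟨v, w, x, r, hv, hw, rfl, rfl⟩ := rubblingStep_iff.1 hstep
    exact ih.expand hv hw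

lemma exists_rubblingReach (h : TreeReachable G p u) :
    ∃ r : V → ℕ, RubblingReach G p (r + Pi.single u 1) := by
  induction h with
  | leaf h =>
    obtain ⟨r, rfl⟩ := exists_eq_add_single h
    exact ⟨r, .refl⟩
  | @node p q a b u ha hb _ _ ihp ihq =>
    obtain ⟨r, hr⟩ := ihp
    obtain ⟨t, ht⟩ := ihq
    have hab : RubblingReach G (p + q) (t + Pi.single b 1 + (r + Pi.single a 1)) :=
      (hr.add_right q).trans (add_comm q _ ▸ ht.add_right (r + Pi.single a 1))
    exact ⟨r + t, hab.tail (rubblingStep_iff.2 ⟨a, b, u, r + t, ha, hb, by abel, rfl⟩)⟩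

end TreeReachable

theorem kReachable_one_iff : KReachable G p u 1 ↔ TreeReachable G p u := by
  constructor
  · rintro ⟨q, hpq, hq⟩
    exact .of_rubblingReach hpq (.leaf hq)
  · intro h
    obtain ⟨r, hr⟩ := h.exists_rubblingReach
    exact ⟨_, hr, by simp⟩

end Trees

section Columns

/-- The number of pebbles on a column of the ladder, whose two vertices are indexed by `Bool`. -/
def columnSize (c : Bool → ℕ) : ℕ := c true + c false

/-- The weight of the column `c` at the vertex `j` of an adjacent column, in units in which a pebble
at distance `d` weighs `2 ^ (2 - d)`. At the vertex `j` of the column itself the weight is twice as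
large. -/
def columnWeight (c : Bool → ℕ) (j : Bool) : ℕ := 2 * c j + c (!j)

lemma columnWeight_add (c d : Bool → ℕ) (j : Bool) :
    columnWeight (c + d) j = columnWeight c j + columnWeight d j := by
  simp only [columnWeight, Pi.add_apply]
  ring

lemma columnWeight_true_add_false (c : Bool → ℕ) :
    columnWeight c true + columnWeight c false = 3 * columnSize c := by
  simp only [columnWeight, columnSize, Bool.not_true, Bool.not_false]
  ring

lemma columnWeight_le (c : Bool → ℕ) (j : Bool) : columnWeight c j ≤ 2 * columnSize c := by
  cases j <;> simp only [columnWeight, columnSize, Bool.not_true, Bool.not_false] <;> omega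

lemma columnWeight_le_not (c : Bool → ℕ) (j : Bool) :
    columnWeight c j ≤ 2 * columnWeight c (!j) := by
  simp only [columnWeight, Bool.not_not]
  omega

end Columns

/-- `Gatherable q i x`: a relaxation of the statement that the pebbles of `q` on the columns up to
`i` of the infinite ladder can be moved so that column `i` carries `x`. The weight at each vertex of
column `i` must be provided by the pebbles of `q` on column `i` together with a content `a` of
column `i - 1` that is itself gatherable. -/
inductive Gatherable (q : ℤ → Bool → ℕ) : ℤ → (Bool → ℕ) → Prop
  | zero (i : ℤ) : Gatherable q i 0
  | step {i : ℤ} {a x : Bool → ℕ} (ha : Gatherable q (i - 1) a)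
      (hx : ∀ j, 2 * columnWeight x j ≤ 2 * columnWeight (q i) j + columnWeight a j) :
      Gatherable q i x

/-- The reflection of a distribution on the infinite ladder in column `0`. -/
def reflect (q : ℤ → Bool → ℕ) (i : ℤ) : Bool → ℕ := q (-i)

lemma reflect_reflect (q : ℤ → Bool → ℕ) : reflect (reflect q) = q := by
  funext i
  simp only [reflect, neg_neg]

/-- `IsSupplied m q i j`: the vertex `j` of column `i` receives weight at least `m` from column `i`
and from contents of the two adjacent columns gathered from the left and from the right. The latter
are expressed by reflection. Weight `4` is that of a pebble on the vertex itself. -/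
def IsSupplied (m : ℕ) (q : ℤ → Bool → ℕ) (i : ℤ) (j : Bool) : Prop :=
  ∃ x y, Gatherable q (i - 1) x ∧ Gatherable (reflect q) (-i - 1) y ∧
    m ≤ 2 * columnWeight (q i) j + columnWeight x j + columnWeight y j

section Ladder

variable {q q' : ℤ → Bool → ℕ} {i : ℤ} {j : Bool} {m B : ℕ} {x y : Bool → ℕ}

namespace Gatherable

lemma exists_pred (h : Gatherable q i x) : ∃ a, Gatherable q (i - 1) a ∧
    ∀ j, 2 * columnWeight x j ≤ 2 * columnWeight (q i) j + columnWeight a j := by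
  cases h with
  | zero => exact ⟨0, zero _, fun j => by simp [columnWeight]⟩
  | step ha hx => exact ⟨_, ha, hx⟩

lemma mono (hq : q ≤ q') (h : Gatherable q i x) : Gatherable q' i x := by
  induction h with
  | zero i => exact zero i
  | @step i a x _ hx ih =>
    refine step ih fun j => (hx j).trans ?_
    have : q i j ≤ q' i j := hq i j
    have : q i (!j) ≤ q' i (!j) := hq i (!j)
    simp only [columnWeight]
    omega

lemma add (h : Gatherable q i x) (h' : Gatherable q' i y) : Gatherable (q + q') i (x + y) := by
  induction h generalizing y with
  | zero i =>
    rw [zero_add]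
    exact h'.mono le_add_self
  | @step i a x _ hx ih =>
    obtain ⟨b, hb, hy⟩ := h'.exists_pred
    refine step (ih hb) fun j => ?_
    have := hx j
    have := hy j
    simp only [Pi.add_apply q q', columnWeight_add]
    omega

lemma translate (h : Gatherable q i x) {c : ℤ} (hq : ∀ k, q' (k + c) = q k) :
    Gatherable q' (i + c) x := by
  induction h with
  | zero i => exact zero _
  | @step i a x _ hx ih =>
    rw [sub_add_eq_add_sub] at ih
    exact step ih fun j => hq i ▸ hx j

lemma columnSize_le (hB : ∀ i, columnSize (q i) ≤ B) (h : Gatherable q i x) :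
    columnSize x ≤ 2 * B := by
  induction h with
  | zero _ => exact Nat.zero_le _
  | @step i a x _ hx ih =>
    have := hB i
    have := hx true
    have := hx false
    have := columnWeight_true_add_false x
    have := columnWeight_true_add_false (q i)
    have := columnWeight_true_add_false a
    omega

end Gatherable

namespace IsSupplied

protected lemma reflect (h : IsSupplied m q i j) : IsSupplied m (reflect q) (-i) j := by
  obtain ⟨x, y, hx, hy, hm⟩ := h
  refine ⟨y, x, hy, ?_, ?_⟩
  · rwa [reflect_reflect, neg_neg]
  · simp only [reflect, neg_neg]
    omega

lemma of_not (h : IsSupplied 4 q i (!j)) : IsSupplied 2 q i j := by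
  obtain ⟨x, y, hx, hy, hm⟩ := h
  refine ⟨x, y, hx, hy, ?_⟩
  have hle (c : Bool → ℕ) : columnWeight c (!j) ≤ 2 * columnWeight c j := by
    simpa using columnWeight_le_not c (!j)
  have := hle (q i)
  have := hle x
  have := hle y
  omega

lemma of_sub_one (h : IsSupplied 4 q (i - 1) j) : IsSupplied 2 q i j := by
  obtain ⟨x, y, hx, hy, hm⟩ := h
  obtain ⟨b, hb, hyb⟩ := hy.exists_pred
  rw [show -(i - 1) - 1 - 1 = -i - 1 by ring] at hb
  simp only [reflect, show -(-(i - 1) - 1) = i by ring] at hyb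
  by_cases hyj : columnWeight y j = 0
  · -- Nothing comes from the right, so a whole pebble arrives at vertex `j` of column `i - 1`.
    refine ⟨Pi.single j 1, 0, .step hx fun k => ?_, .zero _, by simp [columnWeight]⟩
    obtain rfl | rfl : k = j ∨ k = !j := by cases j <;> cases k <;> simp
    · simp only [columnWeight, Pi.single_eq_same, Pi.single_eq_of_ne (Bool.not_ne_self _)]
        at hm hyj ⊢
      omega
    · have := columnWeight_le_not (q (i - 1)) j
      have := columnWeight_le_not x j
      simp only [columnWeight, Bool.not_not, Pi.single_eq_same,
        Pi.single_eq_of_ne (Bool.not_ne_self j)] at *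
      omega
  · refine ⟨0, b, .zero _, hb, ?_⟩
    have := hyb j
    omega

lemma of_add_one (h : IsSupplied 4 q (i + 1) j) : IsSupplied 2 q i j := by
  have h' := h.reflect
  rw [neg_add'] at h'
  simpa only [reflect_reflect, neg_neg] using h'.of_sub_one.reflect

lemma add (h : IsSupplied 2 q i j) (h' : IsSupplied 2 q' i j) : IsSupplied 4 (q + q') i j := by
  obtain ⟨x, y, hx, hy, hm⟩ := h
  obtain ⟨x', y', hx', hy', hm'⟩ := h'
  refine ⟨x + x', y + y', hx.add hx', hy.add hy', ?_⟩
  simp only [Pi.add_apply q q', columnWeight_add]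
  omega

end IsSupplied

lemma TreeReachable.isSupplied {V : Type*} {G : SimpleGraph V} {f : ℤ → Bool → V}
    (hf : ∀ {i j v}, G.Adj v (f i j) → v = f (i - 1) j ∨ v = f (i + 1) j ∨ v = f i (!j))
    {p : V → ℕ} {u : V} (h : TreeReachable G p u) (hu : u = f i j) :
    IsSupplied 4 (fun k l => p (f k l)) i j := by
  induction h generalizing i j with
  | leaf h =>
    subst hu
    exact ⟨0, 0, .zero _, .zero _, by simp only [columnWeight]; omega⟩
  | @node p q a b u ha hb _ _ ihp ihq =>
    subst hu
    have of_adj {r : V → ℕ} {a : V} (ha : G.Adj a (f i j))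
        (ih : ∀ {i j}, a = f i j → IsSupplied 4 (fun k l => r (f k l)) i j) :
        IsSupplied 2 (fun k l => r (f k l)) i j := by
      rcases hf ha with h | h | h
      · exact (ih h).of_sub_one
      · exact (ih h).of_add_one
      · exact (ih h).of_not
    exact (of_adj ha ihp).add (of_adj hb ihq)

/-- The largest number of pebbles that can be gathered from the left on column `i`. It is the junk
value `0` if arbitrarily many can be gathered. -/
noncomputable def capacity (q : ℤ → Bool → ℕ) (i : ℤ) : ℕ :=
  sSup {m | ∃ x, Gatherable q i x ∧ columnSize x = m}

/-- The full capacity of column `i` can be gathered on either of its two vertices. -/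
def IsFlexible (q : ℤ → Bool → ℕ) (i : ℤ) : Prop :=
  ∀ j, ∃ x, Gatherable q i x ∧ 2 * capacity q i ≤ columnWeight x j

lemma bddAbove_columnSize_gatherable (hB : ∀ i, columnSize (q i) ≤ B) (i : ℤ) :
    BddAbove {m | ∃ x, Gatherable q i x ∧ columnSize x = m} := by
  refine ⟨2 * B, ?_⟩
  rintro _ ⟨x, hx, rfl⟩
  exact hx.columnSize_le hB

lemma Gatherable.columnWeight_le_capacity (hB : ∀ i, columnSize (q i) ≤ B)
    (h : Gatherable q i x) (j : Bool) : columnWeight x j ≤ 2 * capacity q i :=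
  (columnWeight_le x j).trans <| Nat.mul_le_mul_left 2 <|
    le_csSup (bddAbove_columnSize_gatherable hB i) ⟨x, h, rfl⟩

lemma two_mul_capacity_le (hB : ∀ i, columnSize (q i) ≤ B) (i : ℤ) :
    2 * capacity q i ≤ 2 * columnSize (q i) + capacity q (i - 1) := by
  obtain ⟨x, hx, hxi⟩ : ∃ x, Gatherable q i x ∧ columnSize x = capacity q i :=
    Nat.sSup_mem (s := {m | ∃ x, Gatherable q i x ∧ columnSize x = m}) ⟨0, 0, .zero i, rfl⟩
      (bddAbove_columnSize_gatherable hB i)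
  obtain ⟨a, ha, hxa⟩ := hx.exists_pred
  have hai : columnSize a ≤ capacity q (i - 1) :=
    le_csSup (bddAbove_columnSize_gatherable hB _) ⟨a, ha, rfl⟩
  have := hxa true
  have := hxa false
  have := columnWeight_true_add_false x
  have := columnWeight_true_add_false (q i)
  have := columnWeight_true_add_false a
  omega

/-- Equality forces both preceding contents to sit entirely on one vertex. -/
lemma IsFlexible.four_mul_capacity_le (hB : ∀ i, columnSize (q i) ≤ B) (h : IsFlexible q i) :
    4 * capacity q i ≤ 3 * columnSize (q i) + 2 * capacity q (i - 1) ∧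
      (4 * capacity q i = 3 * columnSize (q i) + 2 * capacity q (i - 1) →
        IsFlexible q (i - 1)) := by
  have hpred (j : Bool) : ∃ a, Gatherable q (i - 1) a ∧
      4 * capacity q i ≤ 2 * columnWeight (q i) j + columnWeight a j := by
    obtain ⟨x, hx, hxj⟩ := h j
    obtain ⟨a, ha, hxa⟩ := hx.exists_pred
    exact ⟨a, ha, by have := hxa j; omega⟩
  obtain ⟨a, ha, hai⟩ := hpred true
  obtain ⟨b, hb, hbi⟩ := hpred false
  have ha' := ha.columnWeight_le_capacity hB true
  have hb' := hb.columnWeight_le_capacity hB false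
  have := columnWeight_true_add_false (q i)
  refine ⟨by omega, fun heq => ?_⟩
  intro j
  cases j
  · exact ⟨b, hb, by omega⟩
  · exact ⟨a, ha, by omega⟩

lemma two_le_capacity_add_capacity_reflect (hB : ∀ i, columnSize (q i) ≤ B)
    (hi : ∀ j, IsSupplied 4 q i j) (hempty : columnSize (q i) = 0) :
    2 ≤ capacity q (i - 1) + capacity (reflect q) (-i - 1) ∧
      (capacity q (i - 1) + capacity (reflect q) (-i - 1) = 2 →
        IsFlexible q (i - 1) ∧ IsFlexible (reflect q) (-i - 1)) := by
  have hsides (j : Bool) : ∃ x y, Gatherable q (i - 1) x ∧ Gatherable (reflect q) (-i - 1) y ∧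
      4 ≤ columnWeight x j + columnWeight y j ∧ columnWeight x j ≤ 2 * capacity q (i - 1) ∧
      columnWeight y j ≤ 2 * capacity (reflect q) (-i - 1) := by
    obtain ⟨x, y, hx, hy, hxy⟩ := hi j
    have := columnWeight_le (q i) j
    exact ⟨x, y, hx, hy, by omega, hx.columnWeight_le_capacity hB j,
      hy.columnWeight_le_capacity (fun k => hB (-k)) j⟩
  refine ⟨?_, fun heq => ⟨fun j => ?_, fun j => ?_⟩⟩
  · obtain ⟨x, y, -, -, hxy, hx, hy⟩ := hsides true
    omega
  · obtain ⟨x, y, hx, -, hxy, -, hy⟩ := hsides j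
    exact ⟨x, hx, by omega⟩
  · obtain ⟨x, y, -, hy, hxy, hx, -⟩ := hsides j
    exact ⟨y, hy, by omega⟩

/-- The potential of a column with capacity `s`, the second argument telling whether it is flexible.
The values are chosen so that a column with `P ≥ 1` pebbles raises the potential by at most
`3 * P - 2`, while the potentials coming from the two sides drop by at least `4` in total at an
empty column. -/
def potentialValue : ℕ → Bool → ℕ
  | 0, _ => 0
  | 1, flexible => bif flexible then 2 else 1
  | 2, flexible => bif flexible then 6 else 4
  | 3, _ => 6
  | s + 4, _ => 2 * s + 10

lemma potentialValue_add_two_le {s t P : ℕ} {b c : Bool} (hP : 1 ≤ P) (hst : 2 * s ≤ 2 * P + t)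
    (hb : b → 4 * s ≤ 3 * P + 2 * t ∧ (4 * s = 3 * P + 2 * t → c)) :
    potentialValue s b + 2 ≤ potentialValue t c + 3 * P := by
  rcases s with _ | _ | _ | _ | s <;> rcases t with _ | _ | _ | _ | t <;> cases b <;> cases c <;>
    grind [potentialValue]

/-- The least amount by which the potential of a column with capacity `t` drops if the next column
is empty; the second argument tells whether the former is flexible. -/
def potentialDrop : ℕ → Bool → ℕ
  | 0, _ => 0
  | 1, flexible => bif flexible then 2 else 1
  | 2, flexible => bif flexible then 4 else 3
  | _ + 3, _ => 4

lemma potentialValue_add_potentialDrop_le {s t : ℕ} {b c : Bool} (hst : 2 * s ≤ t)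
    (hb : b → 2 * s = t → c) :
    potentialValue s b + potentialDrop t c ≤ potentialValue t c := by
  rcases s with _ | _ | _ | _ | s <;> rcases t with _ | _ | _ | _ | t <;> cases b <;> cases c <;>
    grind [potentialValue, potentialDrop]

lemma four_le_potentialDrop_add {s t : ℕ} {b c : Bool} (hst : 2 ≤ s + t)
    (hbc : s + t = 2 → b ∧ c) : 4 ≤ potentialDrop s b + potentialDrop t c := by
  rcases s with _ | _ | _ | s <;> rcases t with _ | _ | _ | t <;> cases b <;> cases c <;>
    grind [potentialDrop]

open Classical in
/-- The potential of column `i` with respect to the pebbles on its left. -/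
noncomputable def potential (q : ℤ → Bool → ℕ) (i : ℤ) : ℕ :=
  potentialValue (capacity q i) (decide (IsFlexible q i))

open Classical in
lemma potential_add_two_le (hB : ∀ i, columnSize (q i) ≤ B) (hi : 1 ≤ columnSize (q i)) :
    potential q i + 2 ≤ potential q (i - 1) + 3 * columnSize (q i) :=
  potentialValue_add_two_le hi (two_mul_capacity_le hB i) fun h => by
    simpa using (of_decide_eq_true h).four_mul_capacity_le hB

open Classical in
lemma potential_add_potentialDrop_le (hB : ∀ i, columnSize (q i) ≤ B)
    (hi : columnSize (q i) = 0) :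
    potential q i + potentialDrop (capacity q (i - 1)) (decide (IsFlexible q (i - 1))) ≤
      potential q (i - 1) := by
  refine potentialValue_add_potentialDrop_le ?_ fun h heq => ?_
  · simpa [hi] using two_mul_capacity_le hB i
  · exact decide_eq_true (((of_decide_eq_true h).four_mul_capacity_le hB).2 (by omega))

lemma potential_add_potential_reflect_le (hB : ∀ i, columnSize (q i) ≤ B)
    (hi : ∀ j, IsSupplied 4 q i j) :
    potential q i + potential (reflect q) (-i) + 4 ≤
      potential q (i - 1) + potential (reflect q) (-i - 1) + 6 * columnSize (q i) := by
  classical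
  have hB' (k : ℤ) : columnSize (reflect q k) ≤ B := hB (-k)
  have hsize : columnSize (reflect q (-i)) = columnSize (q i) := by simp only [reflect, neg_neg]
  rcases Nat.eq_zero_or_pos (columnSize (q i)) with hempty | hpos
  · have hleft := potential_add_potentialDrop_le hB hempty
    have hright := potential_add_potentialDrop_le hB' (hsize.trans hempty)
    obtain ⟨hcap, hflex⟩ := two_le_capacity_add_capacity_reflect hB hi hempty
    have hdrop := four_le_potentialDrop_add hcap
      (b := decide (IsFlexible q (i - 1))) (c := decide (IsFlexible (reflect q) (-i - 1)))
      (by simpa using hflex)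
    omega
  · have hleft := potential_add_two_le hB hpos
    have hright := potential_add_two_le hB' (hsize ▸ hpos)
    omega

lemma potential_periodic {c : ℤ} (hq : Function.Periodic q c) :
    Function.Periodic (potential q) c := by
  intro i
  have hiff (x : Bool → ℕ) : Gatherable q (i + c) x ↔ Gatherable q i x := by
    refine ⟨fun h => ?_, fun h => h.translate hq⟩
    simpa using h.translate hq.neg
  have hcap : capacity q (i + c) = capacity q i := by simp only [capacity, hiff]
  have hflex : IsFlexible q (i + c) ↔ IsFlexible q i := by simp only [IsFlexible, hiff, hcap]
  exact congrArg₂ potentialValue hcap (decide_eq_decide.2 hflex)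

lemma reflect_periodic {c : ℤ} (hq : Function.Periodic q c) : Function.Periodic (reflect q) c :=
  fun i => by rw [reflect, neg_add, hq.neg, reflect]

lemma columnSize_le_sum_range {N : ℕ} (hN : 0 < N) (hq : Function.Periodic q N) (i : ℤ) :
    columnSize (q i) ≤ ∑ k ∈ Finset.range N, columnSize (q k) := by
  obtain ⟨k, ⟨hk, hkN⟩, hik⟩ := hq.exists_mem_Ico₀ (Nat.cast_pos.2 hN) i
  lift k to ℕ using hk
  rw [hik]
  exact Finset.single_le_sum_of_canonicallyOrdered (f := fun k : ℕ => columnSize (q k))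
    (Finset.mem_range.2 (Nat.cast_lt.1 hkN))

theorem two_mul_le_three_mul_sum_columnSize {N : ℕ} (hN : Function.Periodic q N)
    (hq : ∀ i j, IsSupplied 4 q i j) :
    2 * N ≤ 3 * ∑ k ∈ Finset.range N, columnSize (q k) := by
  obtain rfl | hpos := N.eq_zero_or_pos
  · exact Nat.zero_le _
  let F (k : ℕ) : ℤ := potential q (k - 1) - potential (reflect q) (-k)
  have hF : F N = F 0 := by
    have hleft := potential_periodic hN (-1)
    have hright := potential_periodic (reflect_periodic hN) (-N)
    rw [neg_add_eq_sub] at hleft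
    rw [neg_add_cancel] at hright
    simp [F, hleft, hright]
  have hstep (k : ℕ) : F (k + 1) - F k ≤ 6 * columnSize (q k) - 4 := by
    have := potential_add_potential_reflect_le (columnSize_le_sum_range hpos hN) (hq k)
    simp only [F, Nat.cast_add, Nat.cast_one, add_sub_cancel_right, neg_add']
    omega
  have hsum : 0 ≤ ∑ k ∈ Finset.range N, (6 * (columnSize (q k) : ℤ) - 4) := by
    calc (0 : ℤ) = ∑ k ∈ Finset.range N, (F (k + 1) - F k) := by
          rw [Finset.sum_range_sub, hF, sub_self]
      _ ≤ _ := Finset.sum_le_sum fun k _ => hstep k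
  rw [Finset.sum_sub_distrib, ← Finset.mul_sum, Finset.sum_const, Finset.card_range,
    nsmul_eq_mul, ← Nat.cast_sum] at hsum
  omega

end Ladder

/-- A ladder with `n` rungs whose ends are joined, either straight, as in the prism, or with the two
rails interchanged, as in the Möbius ladder, according to `twist`. The vertices are unrolled to the
infinite ladder `ℤ × Bool`, on which the shift by `n` columns acts. -/
structure RingLadder {V : Type*} (G : SimpleGraph V) (n : ℕ) (twist : Bool) where
  /-- The vertex of `G` in the given column and on the given rail. -/
  vertex : ℤ → Bool → V
  adj_iff : ∀ {i j v},
    G.Adj v (vertex i j) ↔ v = vertex (i - 1) j ∨ v = vertex (i + 1) j ∨ v = vertex i (!j)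
  vertex_add : ∀ i j, vertex (i + n) j = vertex i (j ^^ twist)
  bijective : Function.Bijective fun x : Fin n × Bool => vertex (x.1 : ℕ) x.2

/-- The columns that carry a pebble in the optimal solvable distributions of ladders of length at
least `5`. -/
def pebbledColumns (n : ℕ) : Finset ℕ := {k ∈ Finset.range n | k % 3 ≠ 2}

lemma card_pebbledColumns (n : ℕ) : (pebbledColumns n).card = (2 * n + 2) / 3 := by
  induction n with
  | zero => rfl
  | succ n ih =>
    rw [pebbledColumns] at ih ⊢
    rw [Finset.range_add_one, Finset.filter_insert]
    by_cases h : n % 3 = 2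
    · rw [if_neg (not_not.2 h), ih]
      omega
    · rw [if_pos h, Finset.card_insert_of_notMem (by simp), ih]
      obtain h | h : n % 3 = 0 ∨ n % 3 = 1 := by omega
      all_goals omega

namespace RingLadder

variable {V : Type*} {G : SimpleGraph V} {n : ℕ} {twist : Bool} (c : RingLadder G n twist)
  {i : ℤ} {j : Bool} {k : ℕ} {l l' : Finset ℕ} {p q : V → ℕ}

lemma adj_left : G.Adj (c.vertex (i - 1) j) (c.vertex i j) := c.adj_iff.2 (.inl rfl)

lemma adj_right : G.Adj (c.vertex (i + 1) j) (c.vertex i j) := c.adj_iff.2 (.inr (.inl rfl))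

lemma adj_not : G.Adj (c.vertex i (!j)) (c.vertex i j) := c.adj_iff.2 (.inr (.inr rfl))

lemma forall_vertex {P : V → Prop} : (∀ v, P v) ↔ ∀ k < n, ∀ j, P (c.vertex k j) := by
  rw [c.bijective.surjective.forall, Prod.forall, Fin.forall_iff]

lemma vertex_add_two_mul (i : ℤ) (j : Bool) : c.vertex (i + ↑(2 * n)) j = c.vertex i j := by
  rw [Nat.cast_mul, Nat.cast_two, two_mul, ← add_assoc, c.vertex_add, c.vertex_add, Bool.xor_assoc,
    Bool.xor_self, Bool.xor_false]

lemma sum_columnSize [Fintype V] (p : V → ℕ) :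
    ∑ k ∈ Finset.range n, columnSize (fun j => p (c.vertex k j)) = ∑ v, p v := by
  rw [← c.bijective.sum_comp, Fintype.sum_prod_type, Finset.sum_range]
  simp only [columnSize, Fintype.sum_bool]

lemma sum_columnSize_two_mul [Fintype V] (p : V → ℕ) :
    ∑ k ∈ Finset.range (2 * n), columnSize (fun j => p (c.vertex k j)) = 2 * ∑ v, p v := by
  have hshift (k : ℕ) : columnSize (fun j => p (c.vertex ↑(n + k) j)) =
      columnSize fun j => p (c.vertex k j) := by
    rw [Nat.add_comm, Nat.cast_add]
    cases twist <;> simp [columnSize, c.vertex_add, Nat.add_comm]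
  rw [two_mul, Finset.sum_range_add, Finset.sum_congr rfl fun k _ => hshift k, c.sum_columnSize,
    two_mul]

include c in
theorem two_mul_le_three_mul_sum [DecidableEq V] [Fintype V] (hp : Solvable G p) :
    2 * n ≤ 3 * ∑ v, p v := by
  have hbound := two_mul_le_three_mul_sum_columnSize (N := 2 * n)
    (fun i => funext fun j => congrArg p (c.vertex_add_two_mul i j))
    fun i j => (kReachable_one_iff.1 (hp (c.vertex i j))).isSupplied c.adj_iff.1 rfl
  rw [c.sum_columnSize_two_mul] at hbound
  omega

/-- Both vertices of column `i` are reachable from `p`. -/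
def ReachesColumn (p : V → ℕ) (i : ℤ) : Prop := ∀ j, TreeReachable G p (c.vertex i j)

variable {c}

lemma ReachesColumn.mono (h : c.ReachesColumn p i) (hpq : p ≤ q) : c.ReachesColumn q i :=
  fun j => (h j).mono hpq

lemma ReachesColumn.between (hp : c.ReachesColumn p (i - 1)) (hq : c.ReachesColumn q (i + 1)) :
    c.ReachesColumn (p + q) i :=
  fun j => .node c.adj_left c.adj_right (hp j) (hq j)

lemma ReachesColumn.add_length (h : c.ReachesColumn p i) : c.ReachesColumn p (i + n) :=
  fun j => c.vertex_add i j ▸ h _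

variable (c) [DecidableEq V]

/-- A single pebble on the vertex `j` of column `i`. -/
def pebble (i : ℤ) (j : Bool) : V → ℕ := Pi.single (c.vertex i j) 1

lemma sum_pebble [Fintype V] (i : ℤ) (j : Bool) : ∑ v, c.pebble i j v = 1 :=
  Fintype.sum_pi_single' _ _

lemma treeReachable_pebble (i : ℤ) (j : Bool) : TreeReachable G (c.pebble i j) (c.vertex i j) :=
  .leaf (by rw [pebble, Pi.single_eq_same])

/-- One pebble on each column in `l`, on the rail `true` for the multiples of `3` and on the other
rail otherwise. -/
def pebbles (l : Finset ℕ) : V → ℕ := ∑ k ∈ l, c.pebble k (decide (k % 3 = 0))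

lemma sum_pebbles [Fintype V] (l : Finset ℕ) : ∑ v, c.pebbles l v = l.card := by
  simp only [pebbles, Finset.sum_apply]
  rw [Finset.sum_comm]
  simp only [sum_pebble, Finset.sum_const, smul_eq_mul, mul_one]

lemma pebbles_union (h : Disjoint l l') : c.pebbles (l ∪ l') = c.pebbles l + c.pebbles l' :=
  Finset.sum_union h

lemma pebbles_insert (h : k ∉ l) :
    c.pebbles (insert k l) = c.pebble k (decide (k % 3 = 0)) + c.pebbles l :=
  Finset.sum_insert h

lemma pebbles_mono (h : l ⊆ l') : c.pebbles l ≤ c.pebbles l' :=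
  Finset.sum_le_sum_of_subset h

lemma pebbles_pair (hk : k % 3 = 0) :
    c.pebbles {k, k + 1} = c.pebble k true + c.pebble (k + 1) false := by
  have hk' : (k + 1) % 3 ≠ 0 := by omega
  simp [pebbles, hk, hk']

lemma reachesColumn_pebbles_pair (hk : k % 3 = 0) :
    c.ReachesColumn (c.pebbles {k, k + 1}) k ∧ c.ReachesColumn (c.pebbles {k, k + 1}) (k + 1) := by
  have hleft := c.treeReachable_pebble k true
  have hright := c.treeReachable_pebble (k + 1) false
  have hadj := c.adj_left (i := k + 1) (j := true)
  rw [add_sub_cancel_right] at hadj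
  rw [c.pebbles_pair hk]
  constructor <;> rintro (_ | _)
  · exact .node c.adj_not c.adj_right hleft hright
  · exact hleft.mono le_self_add
  · exact hright.mono le_add_self
  · exact .node hadj c.adj_not hleft hright

lemma reachesColumn_pebbles_zero_one : c.ReachesColumn (c.pebbles {0, 1}) n := by
  simpa using (c.reachesColumn_pebbles_pair (Nat.zero_mod 3)).1.add_length

lemma reachesColumn_pebbles_last (hk : k % 3 = 0) (hkn : k + 1 = n) (hn : 2 < n) :
    c.ReachesColumn (c.pebbles {k, 0, 1}) k := by
  have hlast := c.treeReachable_pebble k true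
  have hfirst : c.ReachesColumn (c.pebbles {0, 1}) (k + 1) := by
    simpa [← hkn] using c.reachesColumn_pebbles_zero_one
  rw [c.pebbles_insert (by simp; omega), decide_eq_true hk]
  rintro (_ | _)
  · exact .node c.adj_not c.adj_right hlast (hfirst false)
  · exact hlast.mono le_self_add

/-- The pebbles on columns `k - 3`, `k - 2` are spared, as they are needed on the other side of
column `k - 1`. -/
lemma exists_reachesColumn_pebbles (hn : 5 ≤ n) (hk : k % 3 = 0) (hkn : k ≤ n) :
    ∃ l ⊆ pebbledColumns n, (∀ x ∈ l, k ≤ x ∨ x + 3 < k) ∧ c.ReachesColumn (c.pebbles l) k := by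
  obtain h | h | h : k = n ∨ k + 1 = n ∨ k + 1 < n := by omega
  · refine ⟨{0, 1}, ?_, ?_, h ▸ c.reachesColumn_pebbles_zero_one⟩ <;> grind [pebbledColumns]
  · refine ⟨{k, 0, 1}, ?_, ?_, c.reachesColumn_pebbles_last hk h (by omega)⟩ <;>
      grind [pebbledColumns]
  · refine ⟨{k, k + 1}, ?_, ?_, (c.reachesColumn_pebbles_pair hk).1⟩ <;> grind [pebbledColumns]

lemma solvable_pebbles (hn : 5 ≤ n) : Solvable G (c.pebbles (pebbledColumns n)) := by
  suffices h : ∀ i < n, c.ReachesColumn (c.pebbles (pebbledColumns n)) i from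
    fun v => kReachable_one_iff.2 (c.forall_vertex.2 h v)
  intro i hi
  obtain h | h | h : i % 3 = 0 ∨ i % 3 = 1 ∨ i % 3 = 2 := by omega
  · obtain ⟨l, hl, -, hli⟩ := c.exists_reachesColumn_pebbles hn h hi.le
    exact hli.mono (c.pebbles_mono hl)
  · obtain ⟨k, rfl⟩ : ∃ k, i = k + 1 := ⟨i - 1, by omega⟩
    have hk : k % 3 = 0 := by omega
    refine ((c.reachesColumn_pebbles_pair hk).2.mono (c.pebbles_mono ?_))
    grind [pebbledColumns]
  · obtain ⟨k, rfl⟩ : ∃ k, i = k + 2 := ⟨i - 2, by omega⟩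
    have hk : k % 3 = 0 := by omega
    obtain ⟨l, hl, hlk, hli⟩ :=
      c.exists_reachesColumn_pebbles hn (k := k + 3) (by omega) (by omega)
    have hdisj : Disjoint {k, k + 1} l := by
      rw [Finset.disjoint_left]
      grind
    have hbetween : c.ReachesColumn (c.pebbles ({k, k + 1} ∪ l)) (k + 2 : ℕ) := by
      rw [c.pebbles_union hdisj]
      refine .between ?_ ?_
      · convert (c.reachesColumn_pebbles_pair hk).2 using 1
        push_cast
        ring
      · convert hli using 1
        push_cast
        ring
    refine hbetween.mono (c.pebbles_mono (Finset.union_subset ?_ hl))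
    grind [pebbledColumns]

lemma solvable_straight_four (c : RingLadder G 4 false) :
    Solvable G (c.pebble 0 true + c.pebble 0 true + c.pebble 2 false) := by
  have hwrap (i : ℤ) (j : Bool) : c.vertex (i + 4) j = c.vertex i j := by
    simpa using c.vertex_add i j
  have hpebble := c.treeReachable_pebble 0 true
  have hpebble' := c.treeReachable_pebble 2 false
  have h0 : TreeReachable G (c.pebble 0 true + c.pebble 0 true) (c.vertex 0 false) :=
    .node c.adj_not c.adj_not hpebble hpebble
  have h1 : TreeReachable G (c.pebble 0 true + c.pebble 0 true) (c.vertex 1 true) :=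
    .node c.adj_left c.adj_left hpebble hpebble
  have h3 : TreeReachable G (c.pebble 0 true + c.pebble 0 true) (c.vertex 3 true) := by
    have hadj : G.Adj (c.vertex 0 true) (c.vertex 3 true) := hwrap 0 true ▸ c.adj_right (i := 3)
    exact .node hadj hadj hpebble hpebble
  refine fun v => kReachable_one_iff.2 (c.forall_vertex.2 (fun k hk j => ?_) v)
  interval_cases k <;> cases j
  · exact h0.mono le_self_add
  · exact hpebble.mono (add_assoc (c.pebble 0 true) _ _ ▸ le_self_add)
  · exact .node c.adj_not c.adj_right h1 hpebble'
  · exact h1.mono le_self_add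
  · exact hpebble'.mono le_add_self
  · exact .node c.adj_left c.adj_not h1 hpebble'
  · exact .node c.adj_not c.adj_left h3 hpebble'
  · exact h3.mono le_self_add

lemma solvable_twisted_four (c : RingLadder G 4 true) :
    Solvable G (c.pebble 0 true + c.pebble 1 false + c.pebble 2 true) := by
  have hwrap (i : ℤ) (j : Bool) : c.vertex (i + 4) j = c.vertex i (!j) := by
    simpa using c.vertex_add i j
  have hpebble0 := c.treeReachable_pebble 0 true
  have hpebble1 := c.treeReachable_pebble 1 false
  have hpebble2 := c.treeReachable_pebble 2 true
  have h0 : TreeReachable G (c.pebble 0 true + c.pebble 1 false) (c.vertex 0 false) :=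
    .node c.adj_not c.adj_right hpebble0 hpebble1
  have h1 : TreeReachable G (c.pebble 0 true + c.pebble 2 true) (c.vertex 1 true) :=
    .node c.adj_left c.adj_right hpebble0 hpebble2
  have h2 : TreeReachable G (c.pebble 1 false + c.pebble 2 true) (c.vertex 2 false) :=
    .node c.adj_left c.adj_not hpebble1 hpebble2
  have hadj (j : Bool) : G.Adj (c.vertex 0 (!j)) (c.vertex 3 j) := hwrap 0 j ▸ c.adj_right (i := 3)
  refine fun v => kReachable_one_iff.2 (c.forall_vertex.2 (fun k hk j => ?_) v)
  interval_cases k <;> cases j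
  · exact h0.mono le_self_add
  · exact hpebble0.mono (add_assoc (c.pebble 0 true) _ _ ▸ le_self_add)
  · exact hpebble1.mono (add_right_comm (c.pebble 0 true) _ _ ▸ le_add_self)
  · exact h1.mono (add_right_comm (c.pebble 0 true) _ _ ▸ le_self_add)
  · exact h2.mono (add_assoc (c.pebble 0 true) _ _ ▸ le_add_self)
  · exact hpebble2.mono le_add_self
  · exact add_assoc (c.pebble 0 true) _ _ ▸ .node (hadj false) c.adj_left hpebble0 h2
  · exact .node (hadj true) c.adj_left h0 hpebble2

variable [Fintype V]

lemma exists_solvable (c : RingLadder G n twist) (hn : 4 ≤ n) :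
    ∃ p : V → ℕ, Solvable G p ∧ ∑ v, p v = (2 * n + 2) / 3 := by
  obtain rfl | hn := hn.eq_or_lt
  · cases twist
    · exact ⟨_, c.solvable_straight_four, by simp [Finset.sum_add_distrib, sum_pebble]⟩
    · exact ⟨_, c.solvable_twisted_four, by simp [Finset.sum_add_distrib, sum_pebble]⟩
  · exact ⟨_, c.solvable_pebbles hn, by rw [sum_pebbles, card_pebbledColumns]⟩

theorem optRub_eq (c : RingLadder G n twist) (hn : 4 ≤ n) : optRub G = (2 * n + 2) / 3 := by
  refine IsLeast.csInf_eq ⟨c.exists_solvable hn, ?_⟩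
  rintro _ ⟨p, hp, rfl⟩
  have := c.two_mul_le_three_mul_sum hp
  omega

end RingLadder

open Fin.CommRing in
/-- The prism as a straight ring ladder. -/
def prismRingLadder (n : ℕ) : RingLadder (prism (n + 2)) (n + 2) false where
  vertex i j := (i, finTwoEquiv.symm j)
  adj_iff {i j v} := by
    obtain ⟨k, r⟩ := v
    obtain ⟨j', rfl⟩ := finTwoEquiv.symm.surjective r
    have hleft : (i : Fin (n + 2)) - k = 1 ↔ k = ↑(i - 1) := by
      rw [Int.cast_sub, Int.cast_one, sub_eq_iff_eq_add', eq_sub_iff_add_eq, eq_comm]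
    have hright : k - (i : Fin (n + 2)) = 1 ↔ k = ↑(i + 1) := by
      rw [Int.cast_add, Int.cast_one, sub_eq_iff_eq_add']
    simp only [prism, boxProd_adj, cycleGraph_adj, pathGraph_two_eq_top, top_adj, Prod.mk.injEq,
      hleft, hright, finTwoEquiv.symm.injective.eq_iff, ne_eq, Bool.eq_not]
    tauto
  vertex_add i j := by
    rw [Int.cast_add, Int.cast_natCast, Fin.natCast_self, add_zero, Bool.xor_false]
  bijective := by
    simp only [Int.cast_natCast, Fin.cast_val_eq_self]
    exact ((Equiv.refl _).prodCongr finTwoEquiv.symm).bijective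

lemma natCast_add_natCast_zmod_two_mul (n : ℕ) : (n + n : ZMod (2 * n)) = 0 := by
  rw [← Nat.cast_add, ← two_mul, ZMod.natCast_self]

lemma mobiusLadder_adj_iff {n : ℕ} [NeZero n] {x y : ZMod (2 * n)} :
    (mobiusLadder n).Adj x y ↔ x = y - 1 ∨ x = y + 1 ∨ x = y + n := by
  have hneg : (y - x = n) ↔ x - y = n := by
    rw [← neg_sub, neg_eq_iff_eq_neg,
      neg_eq_of_add_eq_zero_left (natCast_add_natCast_zmod_two_mul n)]
  have hn : (n : ZMod (2 * n)) ≠ 0 := by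
    rw [Ne, ZMod.natCast_eq_zero_iff]
    exact Nat.not_dvd_of_pos_of_lt (NeZero.pos n) (by have := NeZero.pos n; omega)
  have hone : (1 : ZMod (2 * n)) ≠ 0 := by
    have : Fact (1 < 2 * n) := ⟨by have := NeZero.pos n; omega⟩
    exact one_ne_zero
  have hne : x - y = 1 ∨ x - y = n ∨ y - x = 1 → x ≠ y := by
    rintro h rfl
    simp [hn.symm, hone.symm] at h
  rw [mobiusLadder, fromRel_adj, hneg]
  grind

/-- The Möbius ladder as a twisted ring ladder. The vertices `k` and `k + n` form column `k`. -/
def mobiusRingLadder (n : ℕ) [NeZero n] : RingLadder (mobiusLadder n) n true where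
  vertex i j := i + j.toNat * n
  adj_iff {i j v} := by
    rw [mobiusLadder_adj_iff]
    have := natCast_add_natCast_zmod_two_mul n
    cases j <;> simp only [Bool.not_true, Bool.not_false, Bool.toNat_true, Bool.toNat_false] <;>
      grind
  vertex_add i j := by
    cases j <;> simp [add_assoc, natCast_add_natCast_zmod_two_mul]
  bijective := by
    refine (Fintype.bijective_iff_surjective_and_card _).2 ⟨fun x => ?_, ?_⟩
    · obtain h | h := lt_or_ge x.val n
      · exact ⟨(⟨x.val, h⟩, false), by simp⟩
      · have := x.val_lt
        exact ⟨(⟨x.val - n, by omega⟩, true), by simp [h]⟩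
    · rw [Fintype.card_prod, Fintype.card_fin, Fintype.card_bool, ZMod.card, mul_comm]

theorem optRub_prism {n : ℕ} (hn : 4 ≤ n) : optRub (prism n) = (2 * n + 2) / 3 := by
  obtain ⟨n, rfl⟩ := Nat.exists_eq_add_of_le' (show 2 ≤ n by omega)
  exact (prismRingLadder n).optRub_eq hn

/-- The Möbius ladder of length `n ≥ 4` has the same optimal rubbling number as the
`n`-prism. -/
theorem optRub_mobiusLadder (n : ℕ) (hn : 4 ≤ n) :
    letI : NeZero (2 * n) := ⟨by omega⟩
    optRub (mobiusLadder n) = optRub (prism n) := by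
  have : NeZero n := ⟨by omega⟩
  rw [optRub_prism hn]
  exact (mobiusRingLadder n).optRub_eq hn
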